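/- The representation σ₁ of the binary icosahedral group is irreducible: there is no nonzero vector v ∈ ℂ² that is simultaneously an eigenvector of A₁ and of B₁ (i.e., there do not exist v ≠ 0 and λ, μ ∈ ℂ with A₁·v = λ·v and B₁·v = μ·v). -/

import Mathlib

noncomputable section

/-- `e₅ = exp(2πi/5)`. -/
def e5 : ℂ := Complex.exp (2 * Real.pi * Complex.I / 5)

/-- The matrix `A₁`, image of the generator `r` under the representation `σ₁`. -/
def A1 : Matrix (Fin 2) (Fin 2) ℂ :=
  (1/5 : ℂ) • !![-3*e5 - e5^2 + e5^3 - 2*e5^4, e5 - 3*e5^2 - 2*e5^3 - e5^4;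
                 e5 + 2*e5^2 + 3*e5^3 - e5^4, -2*e5 + e5^2 - e5^3 - 3*e5^4]

/-- The matrix `B₁`, image of the generator `s` under the representation `σ₁`. -/
def B1 : Matrix (Fin 2) (Fin 2) ℂ :=
  (1/5 : ℂ) • !![-e5 - 2*e5^2 - 3*e5^3 - 4*e5^4, 2*e5 - e5^2 + e5^3 - 2*e5^4;
                 2*e5 - e5^2 + e5^3 - 2*e5^4, -4*e5 - 3*e5^2 - 2*e5^3 - e5^4]

lemma e5_rel : e5^4 = -1 - e5 - e5^2 - e5^3 := by
  have h : IsPrimitiveRoot e5 5 := by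
    have := Complex.isPrimitiveRoot_exp 5 (by norm_num)
    simpa [e5] using this
  have h2 := h.geom_sum_eq_zero (by norm_num)
  simp only [Finset.sum_range_succ, Finset.sum_range_zero] at h2
  linear_combination h2

/-- The representation `σ₁` of the binary icosahedral group is
irreducible: no nonzero vector `v ∈ ℂ²` is simultaneously an eigenvector of `A₁`
and of `B₁`. -/
theorem sigma1_irreducible :
    ¬ ∃ v : Fin 2 → ℂ, v ≠ 0 ∧
      ∃ l m : ℂ, A1.mulVec v = l • v ∧ B1.mulVec v = m • v := by
  rintro ⟨v, hv, l, m, hA, hB⟩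
  have a0 := congrFun hA 0
  have a1 := congrFun hA 1
  have b0 := congrFun hB 0
  have b1 := congrFun hB 1
  simp [A1, B1, Matrix.mulVec, dotProduct, Fin.sum_univ_two] at a0 a1 b0 b1
  have he := e5_rel
  generalize e5 = e at *
  generalize hx : v 0 = x at *
  generalize hy : v 1 = y at *
  have a0' : (2 - e + e^2 + 3*e^3)*x + (1+2*e-2*e^2-e^3)*y = 5*l*x := by
    linear_combination 5*a0 + (2*x + y)*he
  have a1' : (1+2*e+3*e^2+4*e^3)*x + (3+e+4*e^2+2*e^3)*y = 5*l*y := by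
    linear_combination 5*a1 + (x + 3*y)*he
  have b0' : (4+3*e+2*e^2+e^3)*x + (2+4*e+e^2+3*e^3)*y = 5*m*x := by
    linear_combination 5*b0 + (4*x + 2*y)*he
  have b1' : (2+4*e+e^2+3*e^3)*x + (1-3*e-2*e^2-e^3)*y = 5*m*y := by
    linear_combination 5*b1 + (2*x + y)*he
  clear a0 a1 b0 b1
  have h5 : e^5 = 1 := by linear_combination (e-1)*he
  have h6 : e^6 = e := by linear_combination e*h5
  have c0 : (1+2*e+3*e^2-e^3)*x + (-2-4*e-6*e^2-3*e^3)*y = 0 := by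
    have key := congrArg₂ (· - ·) (congrArg₂ (· + ·)
      (congrArg ((2 - e + e^2 + 3*e^3) * ·) b0') (congrArg ((1+2*e-2*e^2-e^3) * ·) b1'))
      (congrArg₂ (· + ·)
      (congrArg ((4+3*e+2*e^2+e^3) * ·) a0') (congrArg ((2+4*e+e^2+3*e^3) * ·) a1'))
    beta_reduce at key
    ring_nf at key a0' b0' ⊢
    simp only [he, h5, h6] at key a0' b0' ⊢
    linear_combination (1/5)*key + m*a0' - l*b0'
  have c1 : (-2-4*e-e^2+2*e^3)*x - (1+2*e+3*e^2-e^3)*y = 0 := by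
    have key := congrArg₂ (· - ·) (congrArg₂ (· + ·)
      (congrArg ((1+2*e+3*e^2+4*e^3) * ·) b0') (congrArg ((3+e+4*e^2+2*e^3) * ·) b1'))
      (congrArg₂ (· + ·)
      (congrArg ((2+4*e+e^2+3*e^3) * ·) a0') (congrArg ((1-3*e-2*e^2-e^3) * ·) a1'))
    beta_reduce at key
    ring_nf at key a1' b1' ⊢
    simp only [he, h5, h6] at key a1' b1' ⊢
    linear_combination (1/5)*key + m*a1' - l*b1'
  have dx : (1 - e^2 - e^3) * x = 0 := by
    have key := congrArg₂ (· + ·) (congrArg ((1+2*e+3*e^2-e^3) * ·) c0)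
      (congrArg ((-2-4*e-6*e^2-3*e^3) * ·) c1)
    beta_reduce at key
    ring_nf at key ⊢
    simp only [he, h5, h6] at key ⊢
    linear_combination (-1/25)*key
  have dy : (1 - e^2 - e^3) * y = 0 := by
    have key := congrArg₂ (· - ·) (congrArg ((-2-4*e-e^2+2*e^3) * ·) c0)
      (congrArg ((1+2*e+3*e^2-e^3) * ·) c1)
    beta_reduce at key
    ring_nf at key ⊢
    simp only [he, h5, h6] at key ⊢
    linear_combination (-1/25)*key
  have hu : (2 + e^2 + e^3) * (1 - e^2 - e^3) = 1 := by
    ring_nf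
    simp only [he, h5, h6]
    ring
  have x0 : x = 0 := by linear_combination (2 + e^2 + e^3)*dx - x*hu
  have y0 : y = 0 := by linear_combination (2 + e^2 + e^3)*dy - y*hu
  apply hv
  funext i
  fin_cases i
  · simpa [x0] using hx
  · simpa [y0] using hy

end
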